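/- arXiv:1401.7189 — 3 statements merged into one kernel-verified Lean document; each statement's English description precedes it below -/
import Mathlib

section
/- For Im(τ) > 0 and 0 < Im(z) < Im(τ), the identity (q;q)_∞² / ((ζ;q)_∞ (ζ^{-1}q;q)_∞) = ∑_{n∈ℤ} (−1)^n q^{n(n+1)/2} / (1 − ζ q^n) holds, where q = e^{2πiτ} and ζ = e^{2πiz}. -/
open Complex

namespace GL11

/-- The finite product `(q;q)_k`. -/
noncomputable def Q (q : ℂ) (k : ℕ) : ℂ := ∏ j ∈ Finset.range k, (1 - q ^ (j + 1))

lemma prod_low (q : ℂ) (k : ℕ) :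
    ∏ j ∈ Finset.range k, (q ^ k - q ^ j) =
      (-1) ^ k * q ^ (∑ i ∈ Finset.range k, i) * Q q k := by
  have h1 : ∏ j ∈ Finset.range k, (q ^ k - q ^ j) =
      ∏ j ∈ Finset.range k, ((-1) * q ^ j * (1 - q ^ (k - 1 - j + 1))) := by
    refine Finset.prod_congr rfl fun j hj => ?_
    have hj' := Finset.mem_range.mp hj
    have : q ^ k = q ^ j * q ^ (k - 1 - j + 1) := by
      rw [← pow_add]; congr 1; omega
    rw [this]; ring
  rw [h1, Finset.prod_mul_distrib, Finset.prod_mul_distrib, Finset.prod_pow_eq_pow_sum,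
    Finset.prod_range_reflect (fun j => 1 - q ^ (j + 1)) k, Q]
  simp

lemma prod_erase (q : ℂ) (k d : ℕ) :
    ∏ j ∈ (Finset.range (k + d + 1)).erase k, (q ^ k - q ^ j) =
      (-1) ^ k * q ^ (∑ i ∈ Finset.range k, i) * Q q k * q ^ (k * d) * Q q d := by
  induction d with
  | zero =>
    have : (Finset.range (k + 0 + 1)).erase k = Finset.range k := by
      ext; simp; omega
    rw [this, prod_low]; simp [Q]
  | succ d ih =>
    have : (Finset.range (k + (d + 1) + 1)).erase k =
        insert (k + d + 1) ((Finset.range (k + d + 1)).erase k) := by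
      ext; simp; omega
    rw [this, Finset.prod_insert (by simp), ih]
    have hQ : Q q (d + 1) = Q q d * (1 - q ^ (d + 1)) := by
      simp [Q, Finset.prod_range_succ]
    rw [hQ]
    ring

lemma two_S (k : ℕ) : (2 : ℤ) * ((∑ i ∈ Finset.range k, i : ℕ) : ℤ) = k * (k - 1) := by
  induction k with
  | zero => simp
  | succ k ih => rw [Finset.sum_range_succ]; push_cast at *; linarith

lemma two_t (n : ℤ) : 2 * (n * (n + 1) / 2) = n * (n + 1) :=
  Int.mul_ediv_cancel' (Int.even_mul_succ_self n).two_dvd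

lemma prod_full (q ζ : ℂ) (hζ0 : ζ ≠ 0) (N : ℕ) :
    ∏ k ∈ Finset.range (2 * N + 1), (ζ * q ^ N - q ^ k) =
      (-1) ^ (N + 1) * q ^ (∑ i ∈ Finset.range (N + 1), i) *
        (∏ j ∈ Finset.range (N + 1), (1 - ζ * q ^ j)) * (ζ * q ^ N) ^ N *
        ∏ j ∈ Finset.range N, (1 - ζ⁻¹ * q ^ (j + 1)) := by
  rw [show 2 * N + 1 = (N + 1) + N by ring, Finset.prod_range_add]
  have h1 : ∏ k ∈ Finset.range (N + 1), (ζ * q ^ N - q ^ k) =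
      ∏ k ∈ Finset.range (N + 1), ((-1) * q ^ k * (1 - ζ * q ^ (N + 1 - 1 - k))) := by
    refine Finset.prod_congr rfl fun j hj => ?_
    have hj' := Finset.mem_range.mp hj
    have : q ^ N = q ^ j * q ^ (N + 1 - 1 - j) := by
      rw [← pow_add]; congr 1; omega
    rw [this]; ring
  have h2 : ∏ k ∈ Finset.range N, (ζ * q ^ N - q ^ (N + 1 + k)) =
      ∏ k ∈ Finset.range N, ((ζ * q ^ N) * (1 - ζ⁻¹ * q ^ (k + 1))) := by
    refine Finset.prod_congr rfl fun j hj => ?_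
    field_simp
    ring
  rw [h1, h2, Finset.prod_mul_distrib, Finset.prod_mul_distrib, Finset.prod_mul_distrib,
    Finset.prod_pow_eq_pow_sum, Finset.prod_range_reflect (fun j => 1 - ζ * q ^ j) (N + 1)]
  simp
  ring

lemma term_eq (q ζ : ℂ) (hq0 : q ≠ 0) (A B : ℂ) (N k d : ℕ) (hkd : k + d = 2 * N) :
    (-1) ^ (N + 1) * q ^ (∑ i ∈ Finset.range (N + 1), i) *
      (((-1) ^ k * q ^ (∑ i ∈ Finset.range k, i) * A * q ^ (k * d) * B)⁻¹ *
        (ζ * q ^ N - q ^ k)⁻¹ * (q ^ k) ^ N) =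
    (-1) ^ ((N : ℤ) - k) * q ^ (((N : ℤ) - k) * ((N : ℤ) - k + 1) / 2) /
      (1 - ζ * q ^ ((N : ℤ) - k)) * (A⁻¹ * B⁻¹) := by
  have e1 : ζ * q ^ N - q ^ k = (-1) * q ^ k * (1 - ζ * q ^ ((N : ℤ) - k)) := by
    have : q ^ N = q ^ k * q ^ ((N : ℤ) - k) := by
      rw [← zpow_natCast, ← zpow_natCast, ← zpow_add₀ hq0]; congr 1; ring
    rw [this]; ring
  have e2 : q ^ (((N : ℤ) - k) * ((N : ℤ) - k + 1) / 2) * q ^ (∑ i ∈ Finset.range k, i) *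
      q ^ (k * d) * q ^ k = q ^ (∑ i ∈ Finset.range (N + 1), i) * (q ^ k) ^ N := by
    rw [← pow_mul]
    simp only [← zpow_natCast, ← zpow_add₀ hq0]
    congr 1
    have h1 := two_S k
    have h2 := two_S (N + 1)
    have h3 := two_t ((N : ℤ) - k)
    have h4 : (d : ℤ) = 2 * N - k := by omega
    push_cast at *
    rw [h4]
    linarith
  have e3 : ((-1 : ℂ)) ^ ((N : ℤ) - k) = (-1) ^ N * (-1) ^ k := by
    rw [zpow_sub₀ (by norm_num), zpow_natCast, zpow_natCast, div_eq_mul_inv, ← inv_pow]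
    norm_num
  have e4 : ((-1 : ℂ) ^ k)⁻¹ = (-1) ^ k := by rw [← inv_pow]; norm_num
  have e5 : q ^ (((N : ℤ) - k) * ((N : ℤ) - k + 1) / 2) =
      q ^ (∑ i ∈ Finset.range (N + 1), i) * (q ^ k) ^ N * (q ^ (∑ i ∈ Finset.range k, i))⁻¹ *
      (q ^ (k * d))⁻¹ * (q ^ k)⁻¹ := by
    rw [← e2]; field_simp
  rw [e1, e3, e5]
  simp only [mul_inv, e4, div_eq_mul_inv]
  rw [pow_succ]
  norm_num
  ring

lemma fin_id (q ζ : ℂ) (hq0 : q ≠ 0) (hζ0 : ζ ≠ 0) (hq : Function.Injective (fun k : ℕ => q ^ k))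
    (hz : ∀ n : ℤ, 1 - ζ * q ^ n ≠ 0) (N : ℕ) :
    ((∏ j ∈ Finset.range (N + 1), (1 - ζ * q ^ j)) *
      ∏ j ∈ Finset.range N, (1 - ζ⁻¹ * q ^ (j + 1)))⁻¹ =
    ∑ k ∈ Finset.range (2 * N + 1),
      (-1) ^ ((N : ℤ) - k) * q ^ (((N : ℤ) - k) * ((N : ℤ) - k + 1) / 2) /
      (1 - ζ * q ^ ((N : ℤ) - k)) * ((Q q k)⁻¹ * (Q q (2 * N - k))⁻¹) := by
  have hne : ∀ i ∈ Finset.range (2 * N + 1), ζ * q ^ N ≠ q ^ i := by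
    intro i _ h
    apply hz ((N : ℤ) - i)
    rw [zpow_sub₀ hq0, zpow_natCast, zpow_natCast, ← mul_div_assoc, h,
      div_self (pow_ne_zero _ hq0), sub_self]
  have key := Lagrange.eval_interpolate_not_at_node (s := Finset.range (2 * N + 1))
    (v := fun k : ℕ => q ^ k) (x := ζ * q ^ N) (fun i => (q ^ i) ^ N) hne
  rw [← Lagrange.eq_interpolate_of_eval_eq (f := (Polynomial.X : Polynomial ℂ) ^ N)
    (s := Finset.range (2 * N + 1)) (v := fun k : ℕ => q ^ k) _ (hq.injOn)
    (by rw [Polynomial.degree_X_pow, Finset.card_range]; norm_cast; omega)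
    (by intro i _; simp), Lagrange.eval_nodal] at key
  have hnz : ∏ k ∈ Finset.range (2 * N + 1), (ζ * q ^ N - q ^ k) ≠ 0 :=
    Finset.prod_ne_zero_iff.mpr fun i hi => sub_ne_zero.mpr (hne i hi)
  rw [prod_full q ζ hζ0] at key hnz
  have hy : (ζ * q ^ N) ^ N ≠ 0 := by positivity
  simp only [Polynomial.eval_pow, Polynomial.eval_X] at key
  have hs : ∑ k ∈ Finset.range (2 * N + 1),
      (-1) ^ ((N : ℤ) - k) * q ^ (((N : ℤ) - k) * ((N : ℤ) - k + 1) / 2) /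
      (1 - ζ * q ^ ((N : ℤ) - k)) * ((Q q k)⁻¹ * (Q q (2 * N - k))⁻¹) =
      (-1) ^ (N + 1) * q ^ (∑ i ∈ Finset.range (N + 1), i) *
      ∑ i ∈ Finset.range (2 * N + 1),
        Lagrange.nodalWeight (Finset.range (2 * N + 1)) (fun k : ℕ => q ^ k) i *
        (ζ * q ^ N - q ^ i)⁻¹ * (q ^ i) ^ N := by
    rw [Finset.mul_sum]
    refine Finset.sum_congr rfl fun k hk => ?_
    have hk' := Finset.mem_range.mp hk
    obtain ⟨d, hd⟩ : ∃ d, k + d = 2 * N := ⟨2 * N - k, by omega⟩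
    rw [Lagrange.nodalWeight, Finset.prod_inv_distrib]
    rw [← hd, prod_erase, term_eq q ζ hq0 _ _ N k d hd, Nat.add_sub_cancel_left]
  rw [hs]
  apply inv_eq_of_mul_eq_one_right
  apply mul_left_cancel₀ hy
  rw [mul_one]
  conv_rhs => rw [key]
  ring

open Filter Topology

/-- `1/(q;q)_m` for integer `m`, zero for negative `m`. -/
noncomputable def R (q : ℂ) (m : ℤ) : ℂ := if 0 ≤ m then (Q q m.toNat)⁻¹ else 0

/-- The general term of the sum. -/
noncomputable def a (q ζ : ℂ) (n : ℤ) : ℂ :=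
  (-1 : ℂ) ^ n * q ^ (n * (n + 1) / 2) / (1 - ζ * q ^ n)

lemma sum_eq (q ζ : ℂ) (N : ℕ) :
    ∑' n : ℤ, a q ζ n * (R q (N - n) * R q (N + n)) =
    ∑ k ∈ Finset.range (2 * N + 1),
      (-1) ^ ((N : ℤ) - k) * q ^ (((N : ℤ) - k) * ((N : ℤ) - k + 1) / 2) /
      (1 - ζ * q ^ ((N : ℤ) - k)) * ((Q q k)⁻¹ * (Q q (2 * N - k))⁻¹) := by
  have hinj : Function.Injective (fun k : ℕ => (N : ℤ) - k) := by
    intro x y h; simp at h; exact h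
  rw [← hinj.tsum_eq, tsum_eq_sum (s := Finset.range (2 * N + 1))]
  · refine Finset.sum_congr rfl fun k hk => ?_
    have hk' := Finset.mem_range.mp hk
    rw [R, R, if_pos (by omega), if_pos (by omega), a]
    have h1 : ((N : ℤ) - (N - k)).toNat = k := by omega
    have h2 : ((N : ℤ) + (N - k)).toNat = 2 * N - k := by omega
    rw [h1, h2]
  · intro k hk
    have hk' : ¬ k < 2 * N + 1 := fun h => hk (Finset.mem_range.mpr h)
    have : R q ((N : ℤ) + (N - k)) = 0 := by rw [R, if_neg (by omega)]
    rw [this]; simp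
  · intro n hn
    by_contra hcon
    apply hn
    have h : ¬ (0 ≤ (N : ℤ) - n) := by
      intro h0
      exact hcon ⟨((N : ℤ) - n).toNat, by simp only; omega⟩
    have : R q ((N : ℤ) - n) = 0 := by rw [R, if_neg h]
    simp only [this]; simp

lemma norm_den {q ζ : ℂ} (hq0 : q ≠ 0) (hq1 : ‖q‖ < 1) (h1 : ‖q‖ < ‖ζ‖) (h2 : ‖ζ‖ < 1) :
    ∃ c : ℝ, 0 < c ∧ ∀ n : ℤ, c ≤ ‖1 - ζ * q ^ n‖ := by
  have hq : 0 < ‖q‖ := norm_pos_iff.mpr hq0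
  refine ⟨min (1 - ‖ζ‖) (‖ζ‖ * ‖q‖⁻¹ - 1), lt_min (by linarith) ?_, fun n => ?_⟩
  · rw [← div_eq_mul_inv, sub_pos, lt_div_iff₀ hq]; linarith
  · have hn : ‖ζ * q ^ n‖ = ‖ζ‖ * ‖q‖ ^ n := by rw [norm_mul, norm_zpow]
    rcases le_or_gt 0 n with h | h
    · refine (min_le_left _ _).trans ?_
      have : ‖q‖ ^ n ≤ 1 := by
        simpa using zpow_le_zpow_right_of_le_one₀ hq hq1.le h
      have h3 := norm_sub_norm_le (1 : ℂ) (ζ * q ^ n)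
      rw [hn, norm_one] at h3
      nlinarith [norm_nonneg ζ]
    · refine (min_le_right _ _).trans ?_
      have : ‖q‖⁻¹ ≤ ‖q‖ ^ n := by
        rw [← zpow_neg_one]
        exact zpow_le_zpow_right_of_le_one₀ hq hq1.le (by omega)
      have h3 := norm_sub_norm_le (ζ * q ^ n) (1 : ℂ)
      rw [hn, norm_one, norm_sub_rev] at h3
      nlinarith [norm_nonneg ζ]

lemma summable_a {q ζ : ℂ} (hq0 : q ≠ 0) (hq1 : ‖q‖ < 1) (h1 : ‖q‖ < ‖ζ‖) (h2 : ‖ζ‖ < 1) :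
    Summable fun n => ‖a q ζ n‖ := by
  obtain ⟨c, hc, hden⟩ := norm_den hq0 hq1 h1 h2
  have hq : 0 < ‖q‖ := norm_pos_iff.mpr hq0
  have hs : Summable fun n : ℤ => ‖q‖ ^ n.natAbs := by
    apply Summable.of_nat_of_neg <;> simpa using summable_geometric_of_lt_one hq.le hq1
  refine Summable.of_nonneg_of_le (fun _ => norm_nonneg _) (fun n => ?_) (hs.mul_left (‖q‖⁻¹ / c))
  have e1 : ‖q‖ ^ (n * (n + 1) / 2) ≤ ‖q‖⁻¹ * ‖q‖ ^ n.natAbs := by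
    rw [← zpow_neg_one, ← zpow_natCast, ← zpow_add₀ hq.ne']
    apply zpow_le_zpow_right_of_le_one₀ hq hq1.le
    have h := two_t n
    have : 2 * (-1 + (n.natAbs : ℤ)) ≤ n * (n + 1) := by
      rcases le_or_gt 0 n with h | h
      · rw [Int.natAbs_of_nonneg h]; nlinarith [sq_nonneg (n - 1)]
      · rw [Int.ofNat_natAbs_of_nonpos h.le]
        have : 0 ≤ (n + 1) * (n + 2) := by
          rcases eq_or_lt_of_le (show n ≤ -1 by omega) with h | h
          · subst h; norm_num
          · nlinarith
        nlinarith
    linarith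
  rw [a, norm_div, norm_mul, norm_zpow, norm_zpow, norm_neg, norm_one, one_zpow, one_mul]
  calc ‖q‖ ^ (n * (n + 1) / 2) / ‖1 - ζ * q ^ n‖
      ≤ (‖q‖⁻¹ * ‖q‖ ^ n.natAbs) / c := by
        gcongr
        exact hden n
    _ = _ := by ring

lemma prod_facts {q x : ℂ} (hq1 : ‖q‖ < 1) (hx : ∀ j : ℕ, 1 - x * q ^ j ≠ 0) :
    Tendsto (fun N => ∏ j ∈ Finset.range N, (1 - x * q ^ j)) atTop
      (𝓝 (∏' j : ℕ, (1 - x * q ^ j))) ∧ ∏' j : ℕ, (1 - x * q ^ j) ≠ 0 := by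
  have hs : Summable fun j : ℕ => ‖-(x * q ^ j)‖ := by
    simp only [norm_neg, norm_mul, norm_pow]
    exact (summable_geometric_of_lt_one (norm_nonneg _) hq1).mul_left _
  simp only [sub_eq_add_neg] at hx ⊢
  exact ⟨(multipliable_one_add_of_summable hs).tendsto_prod_tprod_nat,
    tprod_one_add_ne_zero_of_summable hx hs⟩

theorem main {q ζ : ℂ} (hq0 : q ≠ 0) (hq1 : ‖q‖ < 1) (h1 : ‖q‖ < ‖ζ‖) (h2 : ‖ζ‖ < 1) :
    (∏' j : ℕ, (1 - q ^ (j + 1))) ^ 2 /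
      ((∏' j : ℕ, (1 - ζ * q ^ j)) * (∏' j : ℕ, (1 - ζ⁻¹ * q ^ (j + 1)))) =
    ∑' n : ℤ, a q ζ n := by
  have hq : 0 < ‖q‖ := norm_pos_iff.mpr hq0
  have hζ : 0 < ‖ζ‖ := hq.trans h1
  have hζ0 : ζ ≠ 0 := norm_pos_iff.mp hζ
  obtain ⟨c, hc, hden⟩ := norm_den hq0 hq1 h1 h2
  have hz : ∀ n : ℤ, 1 - ζ * q ^ n ≠ 0 := fun n => norm_pos_iff.mp (hc.trans_le (hden n))
  have hinj : Function.Injective (fun k : ℕ => q ^ k) := by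
    intro x y h
    have h' : ‖q‖ ^ x = ‖q‖ ^ y := by simpa using congrArg norm h
    exact (pow_right_strictAnti₀ hq hq1).injective h'
  obtain ⟨tQ, nQ⟩ := prod_facts (x := q) hq1 (fun j h => by
    rw [sub_eq_zero, ← pow_succ'] at h
    exact absurd (hinj (a₁ := 0) (a₂ := j + 1) (by simpa using h)) (by omega))
  obtain ⟨tA, nA⟩ := prod_facts (x := ζ) hq1 (fun j => by simpa using hz j)
  obtain ⟨tB, nB⟩ := prod_facts (x := ζ⁻¹ * q) hq1 (fun j h => by
    apply hz (-(j + 1 : ℕ))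
    rw [sub_eq_zero, mul_assoc, ← pow_succ'] at h
    rw [zpow_neg, zpow_natCast, sub_eq_zero]
    have := congrArg (·⁻¹) h
    simpa [mul_comm] using this)
  have eQ : ∀ j : ℕ, q * q ^ j = q ^ (j + 1) := fun j => (pow_succ' q j).symm
  simp only [mul_assoc, eQ] at tQ nQ tB nB
  set P := ∏' j : ℕ, (1 - q ^ (j + 1)) with hP
  change Tendsto (Q q) atTop (𝓝 P) at tQ
  have tI : Tendsto (fun N => (Q q N)⁻¹) atTop (𝓝 P⁻¹) := tQ.inv₀ nQ
  obtain ⟨C, hC⟩ := (Metric.isBounded_range_of_tendsto _ tI).exists_norm_le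
  have hC0 : 0 ≤ C := (norm_nonneg _).trans (hC _ ⟨0, rfl⟩)
  have hR : ∀ m, ‖R q m‖ ≤ C := by
    intro m
    rw [R]
    split_ifs
    · exact hC _ ⟨_, rfl⟩
    · simpa using hC0
  have tR : Tendsto (R q) atTop (𝓝 P⁻¹) := by
    have : Tendsto (fun m : ℤ => (Q q m.toNat)⁻¹) atTop (𝓝 P⁻¹) :=
      tI.comp (tendsto_atTop_atTop.mpr fun b => ⟨b, fun m hm => by omega⟩)
    refine this.congr' ?_
    filter_upwards [eventually_ge_atTop 0] with m hm
    rw [R, if_pos hm]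
  have lim1 : Tendsto (fun N : ℕ => ∑' n : ℤ, a q ζ n * (R q (N - n) * R q (N + n))) atTop
      (𝓝 (∑' n : ℤ, a q ζ n * (P⁻¹ * P⁻¹))) := by
    refine tendsto_tsum_of_dominated_convergence
      ((summable_a hq0 hq1 h1 h2).mul_right (C * C)) (fun n => ?_) (Eventually.of_forall ?_)
    · refine Tendsto.const_mul _ (Tendsto.mul (tR.comp ?_) (tR.comp ?_))
      · exact tendsto_atTop_atTop.mpr fun b => ⟨(b + n).toNat, fun m hm => by omega⟩
      · exact tendsto_atTop_atTop.mpr fun b => ⟨(b - n).toNat, fun m hm => by omega⟩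
    · intro N n
      rw [norm_mul, norm_mul]
      gcongr <;> exact hR _
  have lim2 := ((tA.comp (tendsto_add_atTop_nat 1)).mul tB).inv₀ (mul_ne_zero nA nB)
  have := tendsto_nhds_unique lim1 (lim2.congr fun N => by
    rw [sum_eq, ← fin_id q ζ hq0 hζ0 hinj hz N]; rfl)
  rw [tsum_mul_right] at this
  rw [div_eq_mul_inv, ← this]
  field_simp

end GL11

theorem gl11_denominator_identity (z τ : ℂ) (hτ : 0 < τ.im)
    (hz : 0 < z.im) (hzτ : z.im < τ.im) :
    (∏' j : ℕ, (1 - Complex.exp (2 * (Real.pi : ℂ) * I * τ) ^ (j + 1))) ^ 2 /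
        ((∏' j : ℕ, (1 - Complex.exp (2 * (Real.pi : ℂ) * I * z) *
            Complex.exp (2 * (Real.pi : ℂ) * I * τ) ^ j)) *
          (∏' j : ℕ, (1 - (Complex.exp (2 * (Real.pi : ℂ) * I * z))⁻¹ *
            Complex.exp (2 * (Real.pi : ℂ) * I * τ) ^ (j + 1)))) =
      ∑' n : ℤ, (-1 : ℂ) ^ n * Complex.exp (2 * (Real.pi : ℂ) * I * τ) ^ (n * (n + 1) / 2) /
        (1 - Complex.exp (2 * (Real.pi : ℂ) * I * z) *
          Complex.exp (2 * (Real.pi : ℂ) * I * τ) ^ n) := by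
  have hn : ∀ w : ℂ, ‖Complex.exp (2 * (Real.pi : ℂ) * I * w)‖ = Real.exp (-(2 * Real.pi * w.im)) := by
    intro w
    rw [Complex.norm_exp]
    congr 1
    simp
  have hpi := Real.pi_pos
  refine GL11.main (Complex.exp_ne_zero _) ?_ ?_ ?_
  · rw [hn, Real.exp_lt_one_iff]; nlinarith [mul_pos hpi hτ]
  · rw [hn, hn, Real.exp_lt_exp]; nlinarith [mul_pos hpi (sub_pos.mpr hzτ)]
  · rw [hn, Real.exp_lt_one_iff]; nlinarith [mul_pos hpi hz]
end

section
/- For |q| < 1, the identity ∑_{n≥0} q^{(n+1/2)²/2} = η(2τ)²/η(τ) holds, where q = e^{2πiτ} and η(τ) := q^{1/24} ∏_{n≥1}(1−q^n). -/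
open Complex

/-- The Dedekind eta function `η(τ) = q^{1/24} ∏_{n≥1} (1 - q^n)`. -/
noncomputable def dedekindEta (τ : ℂ) : ℂ :=
  Complex.exp ((Real.pi : ℂ) * I * τ / 12) *
    ∏' n : ℕ, (1 - Complex.exp (2 * (Real.pi : ℂ) * I * τ) ^ (n + 1))

/-- The finite product used by Shanks. -/
noncomputable def shanksP (x : ℂ) (n : ℕ) : ℂ :=
  ∏ j ∈ Finset.range n, (1 - x ^ (2 * j + 2)) / (1 - x ^ (2 * j + 1))

lemma one_sub_pow_ne {x : ℂ} (hx : ‖x‖ < 1) (n : ℕ) : 1 - x ^ (n + 1) ≠ 0 := by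
  intro h
  have h1 : x ^ (n + 1) = 1 := (sub_eq_zero.mp h).symm
  have h2 : ‖x‖ ^ (n + 1) = 1 := by rw [← norm_pow, h1, norm_one]
  have h3 : ‖x‖ ^ (n + 1) < 1 := pow_lt_one₀ (norm_nonneg _) hx (by omega)
  linarith

lemma shanksP_succ (x : ℂ) (n : ℕ) :
    shanksP x (n + 1) = shanksP x n * ((1 - x ^ (2 * n + 2)) / (1 - x ^ (2 * n + 1))) := by
  simp only [shanksP, Finset.prod_range_succ]

lemma shanksP_ne {x : ℂ} (hx : ‖x‖ < 1) (n : ℕ) : shanksP x n ≠ 0 :=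
  Finset.prod_ne_zero_iff.mpr fun j _ =>
    div_ne_zero (one_sub_pow_ne hx (2 * j + 1)) (one_sub_pow_ne hx (2 * j))

lemma shanks_telescope {x : ℂ} (hx : ‖x‖ < 1) (m k : ℕ) :
    ∑ s ∈ Finset.range k, (shanksP x (m + 1) / shanksP x s * x ^ (s * (2 * m + 3))) =
    ∑ s ∈ Finset.range k, (shanksP x m / shanksP x s * x ^ (s * (2 * m + 1))) +
      shanksP x m / (1 - x ^ (2 * m + 1)) * ((1 - x ^ (2 * k)) / shanksP x k)
        * x ^ (k * (2 * m + 1)) := by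
  induction k with
  | zero => simp
  | succ k ih =>
    rw [Finset.sum_range_succ, Finset.sum_range_succ, ih, shanksP_succ x k, shanksP_succ x m]
    have h1 := one_sub_pow_ne hx (2 * k)
    have h2 := one_sub_pow_ne hx (2 * k + 1)
    have h3 := one_sub_pow_ne hx (2 * m)
    have hk := shanksP_ne hx k
    have e1 : x ^ (k * (2 * m + 3)) = x ^ (k * (2 * m + 1)) * x ^ (2 * k) := by ring
    have e2 : x ^ ((k + 1) * (2 * m + 1)) = x ^ (k * (2 * m + 1)) * x ^ (2 * m + 1) := by ring
    have e3 : 2 * (k + 1) = 2 * k + 1 + 1 := by ring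
    rw [e1, e2, e3]
    generalize x ^ (k * (2 * m + 1)) = y
    have f1 : (1 - x ^ (2 * k + 1 + 1)) / (shanksP x k * ((1 - x ^ (2 * k + 2)) /
        (1 - x ^ (2 * k + 1)))) = (1 - x ^ (2 * k + 1)) / shanksP x k := by
      field_simp
    rw [f1]
    field_simp
    ring

lemma tri_even (n : ℕ) : (2 * n) * (2 * n + 1) / 2 = n * (2 * n + 1) := by
  rw [mul_assoc]; exact Nat.mul_div_cancel_left _ (by norm_num)

lemma tri_odd (n : ℕ) : (2 * n + 1) * (2 * n + 1 + 1) / 2 = (n + 1) * (2 * n + 1) := by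
  rw [show (2 * n + 1) * (2 * n + 1 + 1) = 2 * ((n + 1) * (2 * n + 1)) by ring]
  exact Nat.mul_div_cancel_left _ (by norm_num)

lemma shanks_sum {x : ℂ} (hx : ‖x‖ < 1) (n : ℕ) :
    ∑ s ∈ Finset.range n, (shanksP x n / shanksP x s * x ^ (s * (2 * n + 1))) =
      ∑ s ∈ Finset.range (2 * n), x ^ (s * (s + 1) / 2) := by
  induction n with
  | zero => simp
  | succ n ih =>
    rw [show 2 * (n + 1) + 1 = 2 * n + 3 by ring, shanks_telescope hx, Finset.sum_range_succ, ih,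
      show 2 * (n + 1) = 2 * n + 1 + 1 by ring, Finset.sum_range_succ, Finset.sum_range_succ,
      tri_even, tri_odd, div_self (shanksP_ne hx n), shanksP_succ]
    have h2 := one_sub_pow_ne hx (2 * n + 1)
    have h3 := one_sub_pow_ne hx (2 * n)
    have hk := shanksP_ne hx n
    have f1 : shanksP x n / (1 - x ^ (2 * n + 1)) * ((1 - x ^ (2 * n + 1 + 1)) /
        (shanksP x n * ((1 - x ^ (2 * n + 2)) / (1 - x ^ (2 * n + 1))))) = 1 := by
      field_simp
    rw [f1]
    ring

lemma shanksP_mul {x : ℂ} (hx : ‖x‖ < 1) (n : ℕ) :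
    shanksP x n * ∏ j ∈ Finset.range (2 * n), (1 - x ^ (j + 1)) =
      (∏ j ∈ Finset.range n, (1 - (x ^ 2) ^ (j + 1))) ^ 2 := by
  induction n with
  | zero => simp [shanksP]
  | succ n ih =>
    rw [show 2 * (n + 1) = 2 * n + 1 + 1 by ring, Finset.prod_range_succ, Finset.prod_range_succ,
      Finset.prod_range_succ, mul_pow, ← ih, shanksP_succ, ← pow_mul]
    have h3 := one_sub_pow_ne hx (2 * n)
    field_simp
    ring

lemma norm_sq_lt {x : ℂ} (hx : ‖x‖ < 1) : ‖x ^ 2‖ < 1 := by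
  rw [norm_pow]; exact pow_lt_one₀ (norm_nonneg _) hx (by norm_num)

lemma euler_ne {x : ℂ} (hx : ‖x‖ < 1) : ∏' n : ℕ, (1 - x ^ (n + 1)) ≠ 0 := by
  have := tprod_one_add_ne_zero_of_summable (f := fun n : ℕ => -x ^ (n + 1))
    (fun i => by simpa [← sub_eq_add_neg] using one_sub_pow_ne hx i)
    (by simpa using (summable_nat_add_iff 1).mpr
          (summable_geometric_of_lt_one (norm_nonneg _) hx))
  simpa [← sub_eq_add_neg] using this

open Filter Topology in
lemma shanksP_tendsto {x : ℂ} (hx : ‖x‖ < 1) :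
    Tendsto (shanksP x) atTop
      (𝓝 ((∏' n : ℕ, (1 - (x ^ 2) ^ (n + 1))) ^ 2 / ∏' n : ℕ, (1 - x ^ (n + 1)))) := by
  have h1 := (ModularForm.multipliable_one_sub_pow hx).hasProd.tendsto_prod_nat
  have h2 := (ModularForm.multipliable_one_sub_pow (norm_sq_lt hx)).hasProd.tendsto_prod_nat
  have h3 : Tendsto (fun n : ℕ => 2 * n) atTop atTop :=
    tendsto_id.const_mul_atTop' (by norm_num)
  refine ((h2.pow 2).div (h1.comp h3) (euler_ne hx)).congr fun n => ?_
  simp only [Function.comp, Pi.div_apply]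
  rw [← shanksP_mul hx, mul_div_cancel_right₀]
  exact Finset.prod_ne_zero_iff.mpr fun j _ => one_sub_pow_ne hx j

lemma summable_tri {x : ℂ} (hx : ‖x‖ < 1) : Summable fun n : ℕ => x ^ (n * (n + 1) / 2) := by
  refine Summable.of_norm_bounded (summable_geometric_of_lt_one (norm_nonneg x) hx) fun n => ?_
  rw [norm_pow]
  refine pow_le_pow_of_le_one (norm_nonneg _) hx.le ?_
  rw [Nat.le_div_iff_mul_le (by norm_num)]
  rcases n with _ | n
  · simp
  · exact Nat.mul_le_mul_left _ (by omega)

open Filter Topology in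
lemma gauss_tri {x : ℂ} (hx : ‖x‖ < 1) :
    ∑' n : ℕ, x ^ (n * (n + 1) / 2) =
      (∏' n : ℕ, (1 - (x ^ 2) ^ (n + 1))) ^ 2 / ∏' n : ℕ, (1 - x ^ (n + 1)) := by
  have hP := shanksP_tendsto hx
  have hL : (∏' n : ℕ, (1 - (x ^ 2) ^ (n + 1))) ^ 2 / ∏' n : ℕ, (1 - x ^ (n + 1)) ≠ 0 :=
    div_ne_zero (pow_ne_zero _ (euler_ne (norm_sq_lt hx))) (euler_ne hx)
  have hI := hP.inv₀ hL
  obtain ⟨A, hA⟩ := hP.norm.bddAbove_range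
  obtain ⟨B, hB⟩ := hI.norm.bddAbove_range
  have hA' : ∀ n, ‖shanksP x n‖ ≤ A := fun n => hA ⟨n, rfl⟩
  have hB' : ∀ n, ‖(shanksP x n)⁻¹‖ ≤ B := fun n => hB ⟨n, rfl⟩
  have hA0 : 0 ≤ A := (norm_nonneg _).trans (hA' 0)
  have hB0 : 0 ≤ B := (norm_nonneg _).trans (hB' 0)
  have h3 : Tendsto (fun n : ℕ => 2 * (n + 1)) atTop atTop :=
    (tendsto_id.const_mul_atTop' (by norm_num)).comp (tendsto_add_atTop_nat 1)
  have hS := (summable_tri hx).hasSum.tendsto_sum_nat.comp h3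
  have hP1 := hP.comp (tendsto_add_atTop_nat 1)
  have hd := hS.sub hP1
  have h0 : Tendsto (fun n : ℕ => (∑ s ∈ Finset.range (2 * (n + 1)), x ^ (s * (s + 1) / 2))
      - shanksP x (n + 1)) atTop (𝓝 0) := by
    have hb : Tendsto (fun n : ℕ => A * B * (n * ‖x‖ ^ n)) atTop (𝓝 0) := by
      simpa using (tendsto_self_mul_const_pow_of_lt_one (norm_nonneg x) hx).const_mul (A * B)
    refine squeeze_zero_norm (fun n => ?_) hb
    rw [← shanks_sum hx, Finset.sum_range_succ']
    have : shanksP x 0 = 1 := by simp [shanksP]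
    simp only [this, div_one, zero_mul, pow_zero, mul_one, add_sub_cancel_right]
    refine (norm_sum_le_of_le (Finset.range n) (f := fun k => shanksP x (n + 1) /
      shanksP x (k + 1) * x ^ ((k + 1) * (2 * (n + 1) + 1)))
      (n := fun _ => A * B * ‖x‖ ^ n) fun k _ => ?_).trans
      (le_of_eq (by simp; ring))
    rw [norm_mul, div_eq_mul_inv, norm_mul, norm_pow]
    have h5 : ‖x‖ ^ ((k + 1) * (2 * (n + 1) + 1)) ≤ ‖x‖ ^ n :=
      pow_le_pow_of_le_one (norm_nonneg _) hx.le (by nlinarith)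
    have := hA' (n + 1)
    have := hB' (k + 1)
    gcongr
  exact sub_eq_zero.mp (tendsto_nhds_unique hd h0)

theorem partial_theta_eta_quotient (τ : ℂ) (hτ : 0 < τ.im) :
    ∑' n : ℕ, Complex.exp ((Real.pi : ℂ) * I * τ * ((n : ℂ) + 1 / 2) ^ 2) =
      dedekindEta (2 * τ) ^ 2 / dedekindEta τ := by
  have hx : ‖Complex.exp (2 * (Real.pi : ℂ) * I * τ)‖ < 1 := by
    rw [Complex.norm_exp, Real.exp_lt_one_iff]
    simp
    positivity
  have e1 : Complex.exp (2 * (Real.pi : ℂ) * I * (2 * τ)) =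
      Complex.exp (2 * (Real.pi : ℂ) * I * τ) ^ 2 := by
    rw [← Complex.exp_nat_mul]; congr 1; push_cast; ring
  have e2 : ∀ n : ℕ, Complex.exp ((Real.pi : ℂ) * I * τ * ((n : ℂ) + 1 / 2) ^ 2) =
      Complex.exp ((Real.pi : ℂ) * I * τ / 4) *
        Complex.exp (2 * (Real.pi : ℂ) * I * τ) ^ (n * (n + 1) / 2) := by
    intro n
    rw [← Complex.exp_nat_mul, ← Complex.exp_add]
    congr 1
    rw [Nat.cast_div (Nat.even_mul_succ_self n).two_dvd (by norm_num)]
    push_cast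
    ring
  have e3 : Complex.exp ((Real.pi : ℂ) * I * (2 * τ) / 12) ^ 2 =
      Complex.exp ((Real.pi : ℂ) * I * τ / 4) * Complex.exp ((Real.pi : ℂ) * I * τ / 12) := by
    rw [← Complex.exp_nat_mul, ← Complex.exp_add]; congr 1; push_cast; ring
  simp_rw [e2]
  rw [tsum_mul_left, gauss_tri hx, dedekindEta, dedekindEta, e1, mul_pow, e3]
  have := euler_ne hx
  have := Complex.exp_ne_zero ((Real.pi : ℂ) * I * τ / 12)
  field_simp
end

section
/- For 0 < Im(z) < Im(τ), the partial fraction decomposition −η(τ)⁶ ζ^{−1}/θ(z;τ)² = ∑_{n∈ℤ} q^{n²+n}/(1−ζq^n)² + 2∑_{n∈ℤ} n q^{n²+n}/(1−ζq^n) holds. -/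
open Complex

/-- The Jacobi theta function
`θ(z;τ) = -i ζ^{-1/2} q^{1/8} (q;q)_∞ (ζ;q)_∞ (ζ⁻¹q;q)_∞`. -/
noncomputable def jtheta (z τ : ℂ) : ℂ :=
  -I * Complex.exp (-(Real.pi : ℂ) * I * z) * Complex.exp ((Real.pi : ℂ) * I * τ / 4) *
    (∏' j : ℕ, (1 - Complex.exp (2 * (Real.pi : ℂ) * I * τ) ^ (j + 1))) *
    (∏' j : ℕ, (1 - Complex.exp (2 * (Real.pi : ℂ) * I * z) *
      Complex.exp (2 * (Real.pi : ℂ) * I * τ) ^ j)) *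
    (∏' j : ℕ, (1 - Complex.exp (-2 * (Real.pi : ℂ) * I * z) *
      Complex.exp (2 * (Real.pi : ℂ) * I * τ) ^ (j + 1)))

open Filter Topology

/-- the product `(ζ;q)_∞` -/
noncomputable def pfA (q ζ : ℂ) : ℂ := ∏' j : ℕ, (1 - ζ * q ^ j)

/-- the combined summand -/
noncomputable def pfT (q : ℂ) (n : ℤ) (ζ : ℂ) : ℂ :=
  q ^ (n ^ 2 + n) / (1 - ζ * q ^ n) ^ 2 + 2 * ((n : ℂ) * q ^ (n ^ 2 + n) / (1 - ζ * q ^ n))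

lemma pf_summable_geom {q : ℂ} (hq : ‖q‖ < 1) (ζ : ℂ) :
    Summable (fun j : ℕ => ‖-(ζ * q ^ j)‖) := by
  simp only [norm_neg, norm_mul, norm_pow]
  exact (summable_geometric_of_lt_one (norm_nonneg _) hq).mul_left _

lemma pf_multipliable {q : ℂ} (hq : ‖q‖ < 1) (ζ : ℂ) :
    Multipliable (fun j : ℕ => 1 - ζ * q ^ j) := by
  simpa [sub_eq_add_neg] using multipliable_one_add_of_summable (pf_summable_geom hq ζ)

lemma pfA_shift {q : ℂ} (hq : ‖q‖ < 1) (ζ : ℂ) :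
    pfA q ζ = (1 - ζ) * pfA q (ζ * q) := by
  have h := tprod_eq_zero_mul' (f := fun j : ℕ => 1 - ζ * q ^ j) (by
    have := pf_multipliable hq (ζ * q)
    refine this.congr fun j => ?_
    ring)
  unfold pfA
  rw [h]
  simp only [pow_zero, mul_one]
  congr 1
  refine tprod_congr fun j => ?_
  ring

lemma pfA_ne_zero {q : ℂ} (hq : ‖q‖ < 1) {ζ : ℂ} (h : ∀ j : ℕ, 1 - ζ * q ^ j ≠ 0) :
    pfA q ζ ≠ 0 := by
  have := tprod_one_add_ne_zero_of_summable (f := fun j : ℕ => -(ζ * q ^ j))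
    (by simpa [sub_eq_add_neg] using h) (pf_summable_geom hq ζ)
  simpa [pfA, sub_eq_add_neg] using this

lemma pfA_self_ne_zero {q : ℂ} (hq : ‖q‖ < 1) : pfA q q ≠ 0 := by
  refine pfA_ne_zero hq fun j h => ?_
  have h1 : q * q ^ j = 1 := (sub_eq_zero.1 h).symm
  have h2 : ‖q‖ ^ (j + 1) = 1 := by rw [← norm_pow, pow_succ', h1]; simp
  have h3 := pow_lt_one₀ (norm_nonneg q) hq (Nat.succ_ne_zero j)
  simp only [Nat.succ_eq_add_one] at h3
  linarith

lemma pfA_differentiable {q : ℂ} (hq : ‖q‖ < 1) : Differentiable ℂ (pfA q) := by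
  have key : HasProdLocallyUniformlyOn (fun (j : ℕ) (ζ : ℂ) => 1 + -(ζ * q ^ j))
      (fun ζ => ∏' j : ℕ, (1 + -(ζ * q ^ j))) Set.univ := by
    apply hasProdLocallyUniformlyOn_of_forall_compact isOpen_univ
    intro K _ hcK
    obtain ⟨C, hC⟩ := hcK.isBounded.exists_norm_le
    refine ((summable_geometric_of_lt_one (norm_nonneg _) hq).mul_left C).hasProdUniformlyOn_nat_one_add
      hcK (.of_forall fun n x hx ↦ ?_) (fun _ ↦ by fun_prop)
    rw [norm_neg, norm_mul, norm_pow]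
    exact mul_le_mul_of_nonneg_right (hC x hx) (by positivity)
  have := key.differentiableOn
    (.of_forall fun _ ↦ by simpa [Finset.prod_fn] using
      DifferentiableOn.fun_finsetProd (fun _ _ ↦ by fun_prop)) isOpen_univ
  rw [differentiableOn_univ] at this
  have h : pfA q = fun ζ => ∏' j : ℕ, (1 + -(ζ * q ^ j)) := by
    funext ζ
    simp [pfA, sub_eq_add_neg]
  rw [h]
  exact this

lemma pf_summable_gauss {r : ℝ} (h0 : 0 < r) (h1 : r < 1) (a : ℤ) :
    Summable (fun n : ℤ => (1 + |(n : ℝ)|) * r ^ (n ^ 2 + a * n)) := by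
  have hl : Real.log r < 0 := Real.log_neg h0 h1
  set T : ℝ := -Real.log r / Real.pi with hT
  have hTpos : 0 < T := div_pos (by linarith) Real.pi_pos
  have hpT : Real.pi * T = -Real.log r := by rw [hT]; field_simp
  have e0 := summable_pow_mul_jacobiTheta₂_term_bound (|(a:ℝ)| * T / 2) hTpos 0
  have e1 := summable_pow_mul_jacobiTheta₂_term_bound (|(a:ℝ)| * T / 2) hTpos 1
  refine (e0.add e1).of_nonneg_of_le (fun n => by positivity) fun n => ?_
  rw [← add_mul, pow_zero, pow_one, Int.cast_abs]
  refine mul_le_mul_of_nonneg_left ?_ (by positivity)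
  rw [← Real.rpow_intCast, Real.rpow_def_of_pos h0]
  apply Real.exp_le_exp.2
  have : -Real.pi * (T * (n:ℝ) ^ 2 - 2 * (|(a:ℝ)| * T / 2) * |(n:ℝ)|)
      = Real.log r * ((n:ℝ)^2 - |(a:ℝ)| * |(n:ℝ)|) := by
    linear_combination (-(n:ℝ)^2 + |(a:ℝ)| * |(n:ℝ)|) * hpT
  rw [this]
  refine mul_le_mul_of_nonpos_left ?_ hl.le
  push_cast
  have := neg_abs_le ((a:ℝ) * n)
  rw [abs_mul] at this
  linarith

lemma pf_far {q : ℂ} (h0 : q ≠ 0) (hq : ‖q‖ < 1) {ζ₀ : ℂ} (hζ : ζ₀ ≠ 0) :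
    ∃ s : Finset ℤ, ∃ U : Set ℂ, IsOpen U ∧ ζ₀ ∈ U ∧
      ∀ ζ ∈ U, ∀ n ∉ s, 1 / 2 ≤ ‖1 - ζ * q ^ n‖ := by
  have hz : 0 < ‖ζ₀‖ := norm_pos_iff.2 hζ
  have hq0 : 0 < ‖q‖ := norm_pos_iff.2 h0
  obtain ⟨N, hN⟩ := exists_pow_lt_of_lt_one
    (show 0 < min (1 / (4 * ‖ζ₀‖)) (‖ζ₀‖ / 4) by positivity) hq
  have hN1 : ‖q‖ ^ N * (4 * ‖ζ₀‖) ≤ 1 := by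
    have := (lt_min_iff.1 hN).1.le
    rwa [le_div_iff₀ (by positivity)] at this
  have hN2 : ‖q‖ ^ N ≤ ‖ζ₀‖ / 4 := (lt_min_iff.1 hN).2.le
  refine ⟨Finset.Ioo (-(N:ℤ)) N, {ζ | ‖ζ₀‖ / 2 < ‖ζ‖} ∩ {ζ | ‖ζ‖ < 2 * ‖ζ₀‖},
    (isOpen_lt continuous_const continuous_norm).inter (isOpen_lt continuous_norm continuous_const),
    ⟨by simp only [Set.mem_ofPred_eq]; linarith, by simp only [Set.mem_ofPred_eq]; linarith⟩, ?_⟩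
  rintro ζ ⟨hl, hu⟩ n hn
  simp only [Set.mem_ofPred_eq] at hl hu
  rw [Finset.mem_Ioo, not_and_or, not_lt, not_lt] at hn
  rcases hn with hn | hn
  · obtain ⟨k, rfl⟩ : ∃ k : ℕ, n = -(k:ℤ) := ⟨n.natAbs, by omega⟩
    have hk : N ≤ k := by omega
    have hp : ‖q‖ ^ k ≤ ‖q‖ ^ N := pow_le_pow_of_le_one hq0.le hq.le hk
    have hn : 2 ≤ ‖ζ * q ^ (-(k:ℤ))‖ := by
      rw [norm_mul, norm_zpow, zpow_neg, zpow_natCast, ← div_eq_mul_inv,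
        le_div_iff₀ (by positivity)]
      linarith
    have := norm_sub_norm_le (ζ * q ^ (-(k:ℤ))) 1
    rw [norm_one, norm_sub_rev] at this
    linarith
  · obtain ⟨k, rfl⟩ : ∃ k : ℕ, n = (k:ℤ) := ⟨n.natAbs, by omega⟩
    have hk : N ≤ k := by omega
    have hp : ‖q‖ ^ k ≤ ‖q‖ ^ N := pow_le_pow_of_le_one hq0.le hq.le hk
    have hn : ‖ζ * q ^ (k:ℤ)‖ ≤ 1 / 2 := by
      rw [norm_mul, norm_zpow, zpow_natCast]
      have : ‖ζ‖ * ‖q‖ ^ k ≤ (2 * ‖ζ₀‖) * ‖q‖ ^ N := by gcongr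
      linarith
    have := norm_sub_norm_le 1 (ζ * q ^ (k:ℤ))
    rw [norm_one] at this
    linarith

lemma pf_bound_a {q ζ : ℂ} {n : ℤ} (h : 1 / 2 ≤ ‖1 - ζ * q ^ n‖) :
    ‖q ^ (n ^ 2 + n) / (1 - ζ * q ^ n) ^ 2‖ ≤ 4 * ((1 + |(n : ℝ)|) * ‖q‖ ^ (n ^ 2 + 1 * n)) := by
  rw [norm_div, norm_pow, norm_zpow, one_mul, div_le_iff₀ (by positivity)]
  have h1 : 1 ≤ 4 * ‖1 - ζ * q ^ n‖ ^ 2 := by nlinarith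
  have h2 : 1 ≤ (1 + |(n : ℝ)|) := by linarith [abs_nonneg (n : ℝ)]
  have h3 : 0 ≤ ‖q‖ ^ (n ^ 2 + n) := by positivity
  have h4 : 1 ≤ (1 + |(n : ℝ)|) * (4 * ‖1 - ζ * q ^ n‖ ^ 2) := one_le_mul_of_one_le_of_one_le h2 h1
  nlinarith

lemma pf_bound_b {q ζ : ℂ} {n : ℤ} (h : 1 / 2 ≤ ‖1 - ζ * q ^ n‖) :
    ‖(n : ℂ) * q ^ (n ^ 2 + n) / (1 - ζ * q ^ n)‖ ≤
      2 * ((1 + |(n : ℝ)|) * ‖q‖ ^ (n ^ 2 + 1 * n)) := by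
  rw [norm_div, norm_mul, norm_zpow, one_mul, div_le_iff₀ (by linarith), Complex.norm_intCast]
  have h3 : 0 ≤ ‖q‖ ^ (n ^ 2 + n) := by positivity
  have h4 : |(n:ℝ)| ≤ (1 + |(n : ℝ)|) * (2 * ‖1 - ζ * q ^ n‖) := by
    nlinarith [abs_nonneg (n : ℝ)]
  nlinarith

lemma pf_bound_t {q ζ : ℂ} {n : ℤ} (h : 1 / 2 ≤ ‖1 - ζ * q ^ n‖) :
    ‖pfT q n ζ‖ ≤ 8 * ((1 + |(n : ℝ)|) * ‖q‖ ^ (n ^ 2 + 1 * n)) := by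
  unfold pfT
  refine (norm_add_le _ _).trans ?_
  rw [norm_mul 2, Complex.norm_two]
  linarith [pf_bound_a h, pf_bound_b h]

lemma pf_summable_ab {q : ℂ} (h0 : q ≠ 0) (hq : ‖q‖ < 1) {ζ : ℂ} (hζ : ζ ≠ 0) :
    Summable (fun n : ℤ => q ^ (n ^ 2 + n) / (1 - ζ * q ^ n) ^ 2) ∧
    Summable (fun n : ℤ => (n : ℂ) * q ^ (n ^ 2 + n) / (1 - ζ * q ^ n)) := by
  obtain ⟨s, U, _, hU, h⟩ := pf_far h0 hq hζ
  have hg := pf_summable_gauss (norm_pos_iff.2 h0) hq 1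
  have hs : ∀ᶠ n in cofinite, n ∉ s := s.eventually_cofinite_notMem
  refine ⟨.of_norm_bounded_eventually (hg.mul_left 4) ?_,
    .of_norm_bounded_eventually (hg.mul_left 2) ?_⟩
  · filter_upwards [hs] with n hn using pf_bound_a (h ζ hU n hn)
  · filter_upwards [hs] with n hn using pf_bound_b (h ζ hU n hn)

lemma pf_summable_t {q : ℂ} (h0 : q ≠ 0) (hq : ‖q‖ < 1) {ζ : ℂ} (hζ : ζ ≠ 0) :
    Summable (fun n : ℤ => pfT q n ζ) :=
  (pf_summable_ab h0 hq hζ).1.add ((pf_summable_ab h0 hq hζ).2.mul_left 2)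

/-- Local structure of the sum near a nonzero point. -/
lemma pf_local {q : ℂ} (h0 : q ≠ 0) (hq : ‖q‖ < 1) {ζ₀ : ℂ} (hζ : ζ₀ ≠ 0) :
    ∃ s : Finset ℤ, ∃ R : ℂ → ℂ, DifferentiableAt ℂ R ζ₀ ∧
      (∀ᶠ ζ in 𝓝 ζ₀, ∑' n : ℤ, pfT q n ζ = ∑ n ∈ s, pfT q n ζ + R ζ) ∧
      ∀ᶠ ζ in 𝓝 ζ₀, ∀ n ∉ s, 1 - ζ * q ^ n ≠ 0 := by
  obtain ⟨s, U, hUo, hU, h⟩ := pf_far h0 hq hζ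
  have hg := pf_summable_gauss (norm_pos_iff.2 h0) hq 1
  have hne : ∀ ζ ∈ U, ∀ n ∉ s, 1 - ζ * q ^ n ≠ 0 := fun ζ hζ n hn h' => by
    have := h ζ hζ n hn
    rw [h', norm_zero] at this
    norm_num at this
  refine ⟨s, fun ζ => ∑' n : {n : ℤ // n ∉ s}, pfT q n ζ, ?_, ?_, ?_⟩
  · refine DifferentiableOn.differentiableAt (s := U) ?_ (hUo.mem_nhds hU)
    refine Complex.differentiableOn_tsum_of_summable_norm
      (u := fun n : {n : ℤ // n ∉ s} => 8 * ((1 + |((n:ℤ) : ℝ)|) * ‖q‖ ^ ((n:ℤ) ^ 2 + 1 * (n:ℤ))))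
      ((hg.mul_left 8).subtype _) ?_ hUo ?_
    · rintro ⟨n, hn⟩ ζ hζ
      have := hne ζ hζ n hn
      unfold pfT
      refine DifferentiableAt.differentiableWithinAt ?_
      fun_prop (disch := simpa using this)
    · rintro ⟨n, hn⟩ ζ hζ
      exact pf_bound_t (h ζ hζ n hn)
  · filter_upwards [isOpen_ne.mem_nhds hζ] with ζ hζ'
    exact ((pf_summable_t h0 hq hζ').sum_add_tsum_subtype_compl s).symm
  · filter_upwards [hUo.mem_nhds hU] with ζ hζ' using hne ζ hζ'

/-- `ζ` is not a power of `q`. -/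
def pfReg (q ζ : ℂ) : Prop := ∀ n : ℤ, 1 - ζ * q ^ n ≠ 0

lemma pfReg_shift {q : ℂ} (h0 : q ≠ 0) {ζ : ℂ} : pfReg q (ζ * q) ↔ pfReg q ζ := by
  constructor
  · intro h n
    have := h (n - 1)
    rwa [mul_assoc, ← zpow_one_add₀ h0, add_sub_cancel] at this
  · intro h n
    have := h (1 + n)
    rwa [zpow_one_add₀ h0, ← mul_assoc] at this

lemma pf_summable_c {q : ℂ} (h0 : q ≠ 0) (hq : ‖q‖ < 1) (a : ℤ) (c d : ℂ) :
    Summable (fun n : ℤ => (c * n + d) * q ^ (n ^ 2 + a * n)) := by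
  refine .of_norm_bounded ((pf_summable_gauss (norm_pos_iff.2 h0) hq a).mul_left (‖c‖ + ‖d‖)) fun n => ?_
  rw [norm_mul, norm_zpow, ← mul_assoc]
  refine mul_le_mul_of_nonneg_right ?_ (by positivity)
  refine (norm_add_le _ _).trans ?_
  rw [norm_mul, Complex.norm_intCast]
  nlinarith [norm_nonneg c, norm_nonneg d, abs_nonneg (n:ℝ), mul_nonneg (norm_nonneg d) (abs_nonneg (n:ℝ))]

lemma pf_tsum_odd (f : ℤ → ℂ) (e : ℤ ≃ ℤ) (h : ∀ n, f (e n) = -f n) : ∑' n, f n = 0 := by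
  have h1 := e.tsum_eq f
  simp only [h, tsum_neg] at h1
  have h2 : (2 : ℂ) * ∑' n, f n = 0 := by linear_combination -h1
  simpa using h2

lemma pf_tsum_err {q : ℂ} (h0 : q ≠ 0) (hq : ‖q‖ < 1) (ζ : ℂ) :
    HasSum (fun n : ℤ => (2 * (n:ℂ) + (-1)) * q ^ (n ^ 2 + (-1) * n) +
      (2 * ζ * n + 0) * q ^ (n ^ 2 + 0 * n)) 0 := by
  have s1 := pf_summable_c h0 hq (-1) 2 (-1)
  have s2 := pf_summable_c h0 hq 0 (2 * ζ) 0
  have h := s1.hasSum.add s2.hasSum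
  rwa [pf_tsum_odd _ (Equiv.subLeft 1) (fun n => by
      simp only [Equiv.subLeft_apply]
      rw [show (1 - n) ^ 2 + (-1) * (1 - n) = n ^ 2 + (-1) * n by ring]
      push_cast; ring),
    pf_tsum_odd _ (Equiv.neg ℤ) (fun n => by
      simp only [Equiv.neg_apply]
      rw [show (-n) ^ 2 + 0 * (-n) = n ^ 2 + 0 * n by ring]
      push_cast; ring), add_zero] at h

lemma pfT_shift {q : ℂ} (h0 : q ≠ 0) {ζ : ℂ} (hr : pfReg q ζ) (n : ℤ) :
    pfT q (n - 1) (ζ * q) = ζ ^ 2 * pfT q n ζ + ((2 * (n:ℂ) + (-1)) * q ^ (n ^ 2 + (-1) * n) +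
      (2 * ζ * n + 0) * q ^ (n ^ 2 + 0 * n)) := by
  have hn := hr n
  unfold pfT
  rw [show (n - 1) ^ 2 + (n - 1) = n ^ 2 + (-1) * n by ring,
    show ζ * q * q ^ (n - 1) = ζ * q ^ n by
      rw [mul_assoc, ← zpow_one_add₀ h0, add_sub_cancel],
    show n ^ 2 + 0 * n = (n ^ 2 + (-1) * n) + n by ring,
    show n ^ 2 + n = (n ^ 2 + (-1) * n) + n + n by ring,
    zpow_add₀ h0 _ n, zpow_add₀ h0 _ n]
  generalize q ^ (n ^ 2 + (-1) * n) = w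
  generalize q ^ n = x at *
  push_cast
  field_simp
  ring

lemma pfF_shift {q : ℂ} (h0 : q ≠ 0) (hq : ‖q‖ < 1) {ζ : ℂ} (hζ : ζ ≠ 0) (hr : pfReg q ζ) :
    ∑' n : ℤ, pfT q n (ζ * q) = ζ ^ 2 * ∑' n : ℤ, pfT q n ζ := by
  rw [← (Equiv.subRight (1:ℤ)).tsum_eq (fun n => pfT q n (ζ * q))]
  simp only [Equiv.subRight_apply, pfT_shift h0 hr]
  have h := ((pf_summable_t h0 hq hζ).hasSum.mul_left (ζ ^ 2)).add (pf_tsum_err h0 hq ζ)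
  rw [h.tsum_eq, add_zero]

/-- the theta product -/
noncomputable def pfP (q ζ : ℂ) : ℂ := pfA q ζ * pfA q (q / ζ)

lemma pfP_shift {q : ℂ} (h0 : q ≠ 0) (hq : ‖q‖ < 1) {ζ : ℂ} (hζ : ζ ≠ 0) (h1 : 1 - ζ ≠ 0) :
    ζ * pfP q (ζ * q) = - pfP q ζ := by
  have e1 := pfA_shift hq ζ
  have e2 := pfA_shift hq (ζ⁻¹)
  unfold pfP
  rw [show q / (ζ * q) = ζ⁻¹ by field_simp, e2, e1, show ζ⁻¹ * q = q / ζ by field_simp]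
  field_simp
  ring

open Classical in
/-- the elliptic function that turns out to be constant -/
noncomputable def pfG (q ζ : ℂ) : ℂ :=
  if pfReg q ζ then pfP q ζ ^ 2 * ∑' n : ℤ, pfT q n ζ else pfA q q ^ 4

lemma pfG_shift {q : ℂ} (h0 : q ≠ 0) (hq : ‖q‖ < 1) {ζ : ℂ} (hζ : ζ ≠ 0) :
    pfG q (ζ * q) = pfG q ζ := by
  unfold pfG
  by_cases hr : pfReg q ζ
  · rw [if_pos hr, if_pos ((pfReg_shift h0).2 hr), pfF_shift h0 hq hζ hr]
    have := pfP_shift h0 hq hζ (by simpa using hr 0)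
    linear_combination (∑' n : ℤ, pfT q n ζ) * (ζ * pfP q (ζ * q) - pfP q ζ) * this
  · rw [if_neg hr, if_neg (fun h => hr ((pfReg_shift h0).1 h))]

lemma pfG_zpow {q : ℂ} (h0 : q ≠ 0) (hq : ‖q‖ < 1) (k : ℤ) {ζ : ℂ} (hζ : ζ ≠ 0) :
    pfG q (ζ * q ^ k) = pfG q ζ := by
  induction k with
  | zero => simp
  | succ i ih =>
    rw [zpow_add_one₀ h0, ← mul_assoc, pfG_shift h0 hq (by positivity), ih]
  | pred i ih =>
    rw [← ih, ← pfG_shift h0 hq (ζ := ζ * q ^ (-(i:ℤ) - 1)) (by positivity), mul_assoc,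
      ← zpow_add_one₀ h0, sub_add_cancel]

lemma pfP_differentiableAt {q : ℂ} (hq : ‖q‖ < 1) {ζ : ℂ} (hζ : ζ ≠ 0) :
    DifferentiableAt ℂ (pfP q) ζ := by
  have h := pfA_differentiable hq
  unfold pfP
  refine (h ζ).mul ?_
  exact DifferentiableAt.comp ζ (h (q / ζ)) (by fun_prop (disch := assumption))

lemma pfT_differentiableAt {q ζ : ℂ} {n : ℤ} (h : 1 - ζ * q ^ n ≠ 0) :
    DifferentiableAt ℂ (pfT q n) ζ := by
  unfold pfT
  fun_prop (disch := simpa using h)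

lemma pf_eventually_ne {q ζ₀ : ℂ} {n : ℤ} (h : 1 - ζ₀ * q ^ n ≠ 0) :
    ∀ᶠ ζ in 𝓝 ζ₀, 1 - ζ * q ^ n ≠ 0 :=
  ContinuousAt.eventually_ne (by fun_prop) h

lemma pfG_differentiableAt_reg {q : ℂ} (h0 : q ≠ 0) (hq : ‖q‖ < 1) {ζ₀ : ℂ} (hζ : ζ₀ ≠ 0)
    (hr : pfReg q ζ₀) : DifferentiableAt ℂ (pfG q) ζ₀ := by
  obtain ⟨s, R, hR, hs, hn⟩ := pf_local h0 hq hζ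
  have hs' : ∀ᶠ ζ in 𝓝 ζ₀, ∀ n ∈ s, 1 - ζ * q ^ n ≠ 0 :=
    (eventually_all_finset s).2 fun n _ => pf_eventually_ne (hr n)
  have : pfG q =ᶠ[𝓝 ζ₀] fun ζ => pfP q ζ ^ 2 * (∑ n ∈ s, pfT q n ζ + R ζ) := by
    filter_upwards [hs, hn, hs'] with ζ h1 h2 h3
    have : pfReg q ζ := fun n => by
      by_cases hns : n ∈ s
      · exact h3 n hns
      · exact h2 n hns
    rw [pfG, if_pos this, h1]
  refine DifferentiableAt.congr_of_eventuallyEq ?_ this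
  refine ((pfP_differentiableAt hq hζ).pow 2).mul (DifferentiableAt.add ?_ hR)
  exact DifferentiableAt.fun_sum fun n _ => pfT_differentiableAt (hr n)

lemma pf_one_ne {q : ℂ} (h0 : q ≠ 0) (hq : ‖q‖ < 1) {n : ℤ} (hn : n ≠ 0) :
    1 - 1 * q ^ n ≠ 0 := by
  intro h
  have h1 : ‖q‖ ^ n = 1 := by
    rw [← norm_zpow, show q ^ n = 1 by linear_combination -h, norm_one]
  rcases (zpow_eq_one_iff_of_ne_zero₀ hn).1 h1 with h | h
  · linarith
  · linarith [norm_nonneg q]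

lemma pfG_one {q : ℂ} : pfG q 1 = pfA q q ^ 4 := by
  rw [pfG, if_neg]
  intro h
  simpa using h 0

lemma pfG_differentiableAt_one {q : ℂ} (h0 : q ≠ 0) (hq : ‖q‖ < 1) :
    DifferentiableAt ℂ (pfG q) 1 := by
  obtain ⟨s, R, hR, hs, hn⟩ := pf_local h0 hq one_ne_zero
  have hs' : ∀ᶠ ζ in 𝓝 (1:ℂ), ∀ n ∈ s.erase 0, 1 - ζ * q ^ n ≠ 0 :=
    (eventually_all_finset _).2 fun n hn => pf_eventually_ne
      (pf_one_ne h0 hq (Finset.ne_of_mem_erase hn))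
  have h0s : (0:ℤ) ∈ s := by
    by_contra h
    have := hn.self_of_nhds 0 h
    simp at this
  have hreg : ∀ᶠ ζ in 𝓝[≠] (1:ℂ), pfReg q ζ := by
    filter_upwards [nhdsWithin_le_nhds hn, nhdsWithin_le_nhds hs', self_mem_nhdsWithin]
      with ζ h2 h3 h4 n
    by_cases hns : n ∈ s
    · by_cases hn0 : n = 0
      · subst hn0
        have h5 : ζ ≠ 1 := h4
        simpa [sub_eq_zero] using h5.symm
      · exact h3 n (Finset.mem_erase.2 ⟨hn0, hns⟩)
    · exact h2 n hns
  have hne : ∀ᶠ ζ in 𝓝[≠] (1:ℂ), ζ ≠ 0 :=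
    nhdsWithin_le_nhds (isOpen_ne.mem_nhds one_ne_zero)
  refine (Complex.analyticAt_of_differentiable_on_punctured_nhds_of_continuousAt ?_ ?_).differentiableAt
  · filter_upwards [hreg, hne] with ζ h1 h2 using pfG_differentiableAt_reg h0 hq h2 h1
  rw [continuousAt_iff_punctured_nhds, pfG_one]
  let H : ℂ → ℂ := fun ζ => (pfA q (ζ * q) * pfA q (q / ζ)) ^ 2 +
    pfP q ζ ^ 2 * (∑ n ∈ s.erase 0, pfT q n ζ + R ζ)
  have hA := (pfA_differentiable hq).continuous
  have hH : ContinuousAt H 1 := by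
    have c1 : ContinuousAt (fun ζ => pfA q (ζ * q)) 1 := by
      exact (hA.comp (continuous_mul_const q)).continuousAt
    have c2 : ContinuousAt (fun ζ => pfA q (q / ζ)) 1 := by
      refine ContinuousAt.comp (f := fun ζ => q / ζ) hA.continuousAt ?_
      fun_prop (disch := norm_num)
    have c3 := (pfP_differentiableAt hq (one_ne_zero)).continuousAt
    have c4 : ContinuousAt (fun ζ => ∑ n ∈ s.erase 0, pfT q n ζ) 1 :=
      tendsto_finsetSum _ fun n hn => (pfT_differentiableAt
        (pf_one_ne h0 hq (Finset.ne_of_mem_erase hn))).continuousAt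
    exact ((c1.mul c2).pow 2).add ((c3.pow 2).mul (c4.add hR.continuousAt))
  have hH1 : H 1 = pfA q q ^ 4 := by
    have : pfP q 1 = 0 := by
      rw [pfP, pfA_shift hq 1]; simp
    simp only [H, this, one_mul, div_one]
    ring
  rw [← hH1]
  refine Tendsto.congr' ?_ (hH.tendsto.mono_left nhdsWithin_le_nhds)
  filter_upwards [hreg, nhdsWithin_le_nhds hs] with ζ h1 h2
  rw [pfG, if_pos h1, h2, ← Finset.add_sum_erase s _ h0s]
  have h3 : 1 - ζ ≠ 0 := by simpa using h1 0
  have h4 : pfP q ζ ^ 2 * pfT q 0 ζ = (pfA q (ζ * q) * pfA q (q / ζ)) ^ 2 := by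
    rw [pfP, pfA_shift hq ζ, pfT]
    simp
    field_simp
  simp only [H]
  linear_combination -h4

lemma pfG_differentiableAt {q : ℂ} (h0 : q ≠ 0) (hq : ‖q‖ < 1) {ζ₀ : ℂ} (hζ : ζ₀ ≠ 0) :
    DifferentiableAt ℂ (pfG q) ζ₀ := by
  by_cases hr : pfReg q ζ₀
  · exact pfG_differentiableAt_reg h0 hq hζ hr
  · unfold pfReg at hr
    push Not at hr
    obtain ⟨n, hn⟩ := hr
    have h1 : ζ₀ * q ^ n = 1 := (sub_eq_zero.1 hn).symm
    have h2 : DifferentiableAt ℂ (pfG q) (ζ₀ * q ^ n) := by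
      rw [h1]; exact pfG_differentiableAt_one h0 hq
    have h3 : DifferentiableAt ℂ (fun ζ => pfG q (ζ * q ^ n)) ζ₀ :=
      DifferentiableAt.comp (f := fun ζ => ζ * q ^ n) ζ₀ h2 (by fun_prop)
    refine h3.congr_of_eventuallyEq ?_
    filter_upwards [isOpen_ne.mem_nhds hζ] with ζ hζ'
    exact (pfG_zpow h0 hq n hζ').symm

lemma pfG_const {q : ℂ} (h0 : q ≠ 0) (hq : ‖q‖ < 1) {ζ : ℂ} (hζ : ζ ≠ 0) :
    pfG q ζ = pfA q q ^ 4 := by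
  have hq0 : 0 < ‖q‖ := norm_pos_iff.2 h0
  have hy : 1 < ‖q‖⁻¹ := (one_lt_inv₀ hq0).2 hq
  let K : Set ℂ := Metric.closedBall 0 ‖q‖⁻¹ ∩ {ζ | 1 ≤ ‖ζ‖}
  have hK : IsCompact K :=
    (isCompact_closedBall _ _).inter_right (isClosed_le continuous_const continuous_norm)
  have hK0 : ∀ ζ ∈ K, ζ ≠ 0 := by
    rintro ζ ⟨_, h⟩ rfl
    simp only [Set.mem_ofPred_eq, norm_zero] at h
    linarith
  have h1K : (1:ℂ) ∈ K := by
    refine ⟨?_, ?_⟩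
    · simpa using hy.le
    · simp
  obtain ⟨c, hcK, hc⟩ := hK.exists_isMaxOn ⟨1, h1K⟩ (f := fun ζ => ‖pfG q ζ‖)
    (fun ζ hζ => (pfG_differentiableAt h0 hq (hK0 ζ hζ)).continuousAt.norm.continuousWithinAt)
  have hmax : IsMaxOn (norm ∘ pfG q) {0}ᶜ c := by
    intro ξ hξ
    have hξ' : ξ ≠ 0 := hξ
    obtain ⟨n, hn1, hn2⟩ := exists_mem_Ico_zpow (norm_pos_iff.2 hξ') hy
    have hp : 0 < ‖q‖ ^ n := by positivity
    have hmem : ξ * q ^ n ∈ K := by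
      rw [inv_zpow] at hn1 hn2
      rw [zpow_add_one₀ hq0.ne', mul_inv] at hn2
      refine ⟨?_, ?_⟩
      · rw [mem_closedBall_zero_iff, norm_mul, norm_zpow]
        calc ‖ξ‖ * ‖q‖ ^ n ≤ ((‖q‖ ^ n)⁻¹ * ‖q‖⁻¹) * ‖q‖ ^ n := by gcongr
          _ = ‖q‖⁻¹ := by field_simp
      · simp only [Set.mem_ofPred_eq]
        rw [norm_mul, norm_zpow]
        calc (1:ℝ) = (‖q‖ ^ n)⁻¹ * ‖q‖ ^ n := by field_simp
          _ ≤ _ := by gcongr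
    have := hc hmem
    simp only [Set.mem_ofPred_eq] at this ⊢
    rw [pfG_zpow h0 hq n hξ'] at this
    exact this
  have hE := Complex.eqOn_of_isPreconnected_of_isMaxOn_norm (f := pfG q) (U := {0}ᶜ) (c := c)
    (isConnected_compl_singleton_of_one_lt_rank (by simp) 0).isPreconnected isOpen_compl_singleton
    (fun ζ hζ => (pfG_differentiableAt h0 hq hζ).differentiableWithinAt) (hK0 c hcK) hmax
  have e1 := hE (show ζ ∈ ({0}ᶜ : Set ℂ) from hζ)
  have e2 := hE (show (1:ℂ) ∈ ({0}ᶜ : Set ℂ) from one_ne_zero)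
  rw [e1, ← pfG_one, e2, Function.const_apply, Function.const_apply]

lemma pf_main {q : ℂ} (h0 : q ≠ 0) (hq : ‖q‖ < 1) {ζ : ℂ} (hζ : ζ ≠ 0) (hr : pfReg q ζ) :
    pfP q ζ ^ 2 * ((∑' n : ℤ, q ^ (n ^ 2 + n) / (1 - ζ * q ^ n) ^ 2) +
      2 * ∑' n : ℤ, (n : ℂ) * q ^ (n ^ 2 + n) / (1 - ζ * q ^ n)) = pfA q q ^ 4 := by
  have h := pfG_const h0 hq hζ
  rw [pfG, if_pos hr] at h
  obtain ⟨ha, hb⟩ := pf_summable_ab h0 hq hζ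
  rw [← h, ← tsum_mul_left, ← ha.tsum_add (hb.mul_left 2)]
  rfl

theorem partial_fractions_N_two (z τ : ℂ) (hτ : 0 < τ.im) (hz : 0 < z.im)
    (hzτ : z.im < τ.im) :
    -dedekindEta τ ^ 6 * (Complex.exp (2 * (Real.pi : ℂ) * I * z))⁻¹ / jtheta z τ ^ 2 =
      (∑' n : ℤ, Complex.exp (2 * (Real.pi : ℂ) * I * τ) ^ (n ^ 2 + n) /
          (1 - Complex.exp (2 * (Real.pi : ℂ) * I * z) *
            Complex.exp (2 * (Real.pi : ℂ) * I * τ) ^ n) ^ 2) +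
        2 * ∑' n : ℤ, (n : ℂ) * Complex.exp (2 * (Real.pi : ℂ) * I * τ) ^ (n ^ 2 + n) /
          (1 - Complex.exp (2 * (Real.pi : ℂ) * I * z) *
            Complex.exp (2 * (Real.pi : ℂ) * I * τ) ^ n) := by
  have hnorm : ∀ w : ℂ, ‖Complex.exp (2 * (Real.pi : ℂ) * I * w)‖ =
      Real.exp (-(2 * Real.pi * w.im)) := fun w => by
    rw [Complex.norm_exp]; simp
  have hnz := hnorm z
  have hnq := hnorm τ
  have hm : Complex.exp (-2 * (Real.pi : ℂ) * I * z) =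
      (Complex.exp (2 * (Real.pi : ℂ) * I * z))⁻¹ := by
    rw [← Complex.exp_neg]; ring_nf
  have hE1 : Complex.exp (-(Real.pi : ℂ) * I * z) ^ 2 =
      (Complex.exp (2 * (Real.pi : ℂ) * I * z))⁻¹ := by
    rw [← Complex.exp_neg, ← Complex.exp_nat_mul]; congr 1; push_cast; ring
  have hE2 : Complex.exp ((Real.pi : ℂ) * I * τ / 4) ^ 2 =
      Complex.exp ((Real.pi : ℂ) * I * τ / 12) ^ 6 := by
    rw [← Complex.exp_nat_mul, ← Complex.exp_nat_mul]; congr 1; push_cast; ring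
  have hE3 : Complex.exp ((Real.pi : ℂ) * I * τ / 12) ≠ 0 := Complex.exp_ne_zero _
  have hζ0 : Complex.exp (2 * (Real.pi : ℂ) * I * z) ≠ 0 := Complex.exp_ne_zero _
  have hq0 : Complex.exp (2 * (Real.pi : ℂ) * I * τ) ≠ 0 := Complex.exp_ne_zero _
  unfold jtheta dedekindEta
  rw [hm]
  generalize Complex.exp (2 * (Real.pi : ℂ) * I * z) = ζ at *
  generalize Complex.exp (2 * (Real.pi : ℂ) * I * τ) = q at *
  generalize Complex.exp (-(Real.pi : ℂ) * I * z) = a at *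
  generalize Complex.exp ((Real.pi : ℂ) * I * τ / 4) = b at *
  generalize Complex.exp ((Real.pi : ℂ) * I * τ / 12) = c at *
  have hpi := Real.pi_pos
  have hq1 : ‖q‖ < 1 := by
    rw [hnq, Real.exp_lt_one_iff]; nlinarith [mul_pos hpi hτ]
  have hζ1 : ‖ζ‖ < 1 := by
    rw [hnz, Real.exp_lt_one_iff]; nlinarith [mul_pos hpi hz]
  have hqζ : ‖q‖ < ‖ζ‖ := by
    rw [hnq, hnz, Real.exp_lt_exp]; nlinarith [mul_pos hpi (sub_pos.2 hzτ)]
  have hqpos : 0 < ‖q‖ := norm_pos_iff.2 hq0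
  have hreg : pfReg q ζ := by
    intro n h
    have h1 : ‖ζ‖ * ‖q‖ ^ n = 1 := by
      rw [← norm_zpow, ← norm_mul, show ζ * q ^ n = 1 by linear_combination -h, norm_one]
    rcases le_or_gt 0 n with hn | hn
    · obtain ⟨k, rfl⟩ := Int.eq_ofNat_of_zero_le hn
      rw [zpow_natCast] at h1
      have : ‖q‖ ^ k ≤ 1 := pow_le_one₀ hqpos.le hq1.le
      nlinarith [norm_nonneg ζ]
    · obtain ⟨k, rfl⟩ : ∃ k : ℕ, n = -((k:ℤ) + 1) := ⟨(-n - 1).toNat, by omega⟩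
      rw [zpow_neg, mul_inv_eq_one₀ (by positivity)] at h1
      have h2 : ‖q‖ ^ ((k:ℤ) + 1) = ‖q‖ ^ k * ‖q‖ := by
        rw [zpow_add_one₀ hqpos.ne', zpow_natCast]
      have : ‖q‖ ^ k ≤ 1 := pow_le_one₀ hqpos.le hq1.le
      nlinarith
  have main := pf_main hq0 hq1 hζ0 hreg
  have hA := pfA_self_ne_zero hq1
  have e1 : ∏' j : ℕ, (1 - q ^ (j + 1)) = pfA q q :=
    tprod_congr fun j => by rw [pow_succ']
  have e2 : ∏' j : ℕ, (1 - ζ * q ^ j) = pfA q ζ := rfl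
  have e3 : ∏' j : ℕ, (1 - ζ⁻¹ * q ^ (j + 1)) = pfA q (q / ζ) :=
    tprod_congr fun j => by rw [pow_succ']; ring
  rw [e1, e2, e3]
  have hP : pfP q ζ ≠ 0 := by
    intro h
    rw [h] at main
    exact hA (by simpa using main.symm)
  rw [mul_comm, ← eq_div_iff (pow_ne_zero 2 hP)] at main
  rw [main]
  have hden : (-I * a * b * pfA q q * pfA q ζ * pfA q (q / ζ)) ^ 2 =
      -(ζ⁻¹ * c ^ 6 * pfA q q ^ 2 * pfP q ζ ^ 2) := by
    rw [pfP, ← hE1, ← hE2]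
    linear_combination (a * b * pfA q q * pfA q ζ * pfA q (q / ζ)) ^ 2 * Complex.I_sq
  rw [hden]
  field_simp
end
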